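/- arXiv:1409.3886 — 4 statements merged into one kernel-verified Lean document; each statement's English description precedes it below -/
import Mathlib

section
/- Let ρ be a probability measure on ℝ × ℝ (the joint law of (Z, X)) with first marginal ρ₁, and suppose that for ρ₁-almost every z the conditional CDF x ↦ F_ρ(z, x) is continuous (i.e., the conditional distribution of X given Z = z is atomless). Then the pushforward of ρ under the map (z, x) ↦ (z, F_ρ(z, x)) equals the product measure ρ₁ ⊗ Uniform(0,1). In particular, the residual F_ρ(Z, X) is uniformly distributed on (0,1) and is independent of Z. -/
open MeasureTheory ProbabilityTheory Set

/-!
The measures `(condCDF ρ z).measure` disintegrate `ρ` over its first marginal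
(`measure_eq_lintegral_condCDF`), so the claim reduces, fibre by fibre, to the probability integral
transform (`map_stieltjes_eq_uniform`): a continuous CDF pushes its own law to the uniform
distribution on `(0, 1)`. Pushing `ρ` forward needs `condCDF` to be jointly measurable, which
follows from right-continuity in the second variable (`measurable_uncurry_condCDF`).
-/

/-- Probability integral transform. For `0 ≤ u < 1` the sublevel set `{f ≤ u}` is either empty, in
which case `u = 0`, or of the form `Iic m` with `f m = u`. -/
lemma map_stieltjes_eq_uniform (f : StieltjesFunction ℝ) (hc : Continuous f)
    (h0 : Filter.Tendsto f Filter.atBot (nhds 0)) (h1 : Filter.Tendsto f Filter.atTop (nhds 1)) :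
    Measure.map f f.measure = volume.restrict (Ioo (0 : ℝ) 1) := by
  have hnn : ∀ x, 0 ≤ f x := f.mono.le_of_tendsto h0
  have hle : ∀ x, f x ≤ 1 := f.mono.ge_of_tendsto h1
  have huniv : f.measure univ = 1 := by simpa using f.measure_univ h0 h1
  have : IsProbabilityMeasure f.measure := ⟨huniv⟩
  have : IsFiniteMeasure (Measure.map f f.measure) := inferInstance
  refine Measure.ext_of_Iic _ _ fun u => ?_
  rw [Measure.map_apply hc.measurable measurableSet_Iic, Measure.restrict_apply measurableSet_Iic]
  rcases lt_or_ge u 0 with hu0 | hu0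
  · have e1 : f ⁻¹' Iic u = ∅ := by
      ext x; simpa using hu0.trans_le (hnn x)
    have e2 : Iic u ∩ Ioo (0 : ℝ) 1 = ∅ := by
      ext x; simp only [mem_inter_iff, mem_Iic, mem_Ioo, mem_empty_iff_false, iff_false]
      intro h; linarith [h.1, h.2.1]
    simp [e1, e2]
  rcases le_or_gt 1 u with hu1 | hu1
  · have e1 : f ⁻¹' Iic u = univ := by
      ext x; simpa using (hle x).trans hu1
    have e2 : Iic u ∩ Ioo (0 : ℝ) 1 = Ioo 0 1 :=
      inter_eq_right.2 fun x hx => hx.2.le.trans hu1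
    simp [e1, e2, huniv]
  have e2 : Iic u ∩ Ioo (0 : ℝ) 1 = Ioc 0 u := by
    ext x; simp only [mem_inter_iff, mem_Iic, mem_Ioo, mem_Ioc]
    exact ⟨fun h => ⟨h.2.1, h.1⟩, fun h => ⟨h.2, h.1, h.2.trans_lt hu1⟩⟩
  rw [e2, Real.volume_Ioc, sub_zero]
  rcases (f ⁻¹' Iic u).eq_empty_or_nonempty with he | hne
  · have : u ≤ 0 := by
      refine ge_of_tendsto h0 (Filter.Eventually.of_forall fun x => ?_)
      by_contra hx
      exact (he ▸ (show x ∈ f ⁻¹' Iic u from (not_le.1 hx).le) : x ∈ (∅ : Set ℝ))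
    rw [he, le_antisymm this hu0]; simp
  · obtain ⟨b, hb⟩ := (h1.eventually (lt_mem_nhds hu1)).exists
    have hbdd : BddAbove (f ⁻¹' Iic u) :=
      ⟨b, fun x hx => not_lt.1 fun hlt => absurd (f.mono hlt.le) (not_le.2 (lt_of_le_of_lt hx hb))⟩
    set m := sSup (f ⁻¹' Iic u) with hm
    have hmem : f m ≤ u := (isClosed_Iic.preimage hc).csSup_mem hne hbdd
    have heq : f ⁻¹' Iic u = Iic m := by
      ext x
      exact ⟨fun hx => le_csSup hbdd hx, fun hx => (f.mono hx).trans hmem⟩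
    have hge : u ≤ f m := by
      refine ge_of_tendsto (hc.continuousWithinAt (s := Ioi m) (x := m)) ?_
      filter_upwards [self_mem_nhdsWithin] with x hx
      by_contra hlt
      have hxu : x ∈ f ⁻¹' Iic u := (not_le.1 hlt).le
      rw [heq] at hxu
      exact (mem_Iic.1 hxu).not_gt (mem_Ioi.1 hx)
    rw [heq, f.measure_Iic h0, sub_zero, le_antisymm hmem hge]

/-- By right-continuity, `F z x < c` iff `F z q < c` for some rational `q > x`. -/
lemma measurable_uncurry_condCDF (ρ : Measure (ℝ × ℝ)) :
    Measurable fun p : ℝ × ℝ => condCDF ρ p.1 p.2 := by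
  refine measurable_of_Iio fun c => ?_
  have : (fun p : ℝ × ℝ => condCDF ρ p.1 p.2) ⁻¹' Iio c
      = ⋃ q : ℚ, {p : ℝ × ℝ | p.2 < q} ∩ {p : ℝ × ℝ | condCDF ρ p.1 q < c} := by
    ext p
    simp only [mem_preimage, mem_Iio, mem_iUnion, mem_inter_iff, mem_ofPred_eq]
    constructor
    · intro h
      have hr := ((condCDF ρ p.1).right_continuous p.2).eventually (gt_mem_nhds h)
      obtain ⟨y, hy, hy'⟩ := (mem_nhdsGE_iff_exists_Ico_subset).1 hr
      obtain ⟨q, hq1, hq2⟩ := exists_rat_btwn (mem_Ioi.1 hy)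
      exact ⟨q, hq1, hy' ⟨hq1.le, hq2⟩⟩
    · rintro ⟨q, hq, h⟩
      exact ((condCDF ρ p.1).mono hq.le).trans_lt h
  rw [this]
  refine MeasurableSet.iUnion fun q => ?_
  exact (measurableSet_lt measurable_snd measurable_const).inter
    (measurableSet_lt ((measurable_condCDF ρ q).comp measurable_fst) measurable_const)

/-- The Stieltjes measures of the conditional CDF disintegrate `ρ` over its first marginal. -/
lemma measure_eq_lintegral_condCDF (ρ : Measure (ℝ × ℝ)) [IsFiniteMeasure ρ]
    {s : Set (ℝ × ℝ)} (hs : MeasurableSet s) :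
    ρ s = ∫⁻ z, (condCDF ρ z).measure (Prod.mk z ⁻¹' s) ∂ρ.fst :=
  (lintegral_toKernel_mem (isCondKernelCDF_condCDF ρ) () hs).symm

/-- Lemma 2.1 (existence): if `ρ` is the joint law of `(Z, X)` on `ℝ × ℝ` and for `ρ.fst`-a.e.
`z` the conditional CDF `x ↦ condCDF ρ z x` is continuous, then the pushforward of `ρ` under
`(z, x) ↦ (z, condCDF ρ z x)` is the product of the first marginal `ρ.fst` and the uniform
distribution on `(0,1)`; in particular the residual `condCDF ρ Z X` is uniform on `(0,1)` and
independent of `Z`. -/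
theorem stmt1 (ρ : Measure (ℝ × ℝ)) [IsProbabilityMeasure ρ]
    (hcont : ∀ᵐ z ∂ρ.fst, Continuous (condCDF ρ z)) :
    Measure.map (fun p : ℝ × ℝ => (p.1, condCDF ρ p.1 p.2)) ρ
      = ρ.fst.prod (volume.restrict (Ioo (0 : ℝ) 1)) := by
  have hmeas : Measurable fun p : ℝ × ℝ => (p.1, condCDF ρ p.1 p.2) :=
    measurable_fst.prodMk (measurable_uncurry_condCDF ρ)
  ext s hs
  rw [Measure.map_apply hmeas hs, Measure.prod_apply hs, measure_eq_lintegral_condCDF ρ (hmeas hs)]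
  refine lintegral_congr_ae ?_
  filter_upwards [hcont] with z hz
  rw [← map_stieltjes_eq_uniform (condCDF ρ z) hz (tendsto_condCDF_atBot ρ z)
    (tendsto_condCDF_atTop ρ z), Measure.map_apply hz.measurable (measurable_prodMk_left hs)]
  rfl
end

section
/- Let (Ω, ℱ, P) be a probability space and X, Y, Z : Ω → ℝ random variables such that the joint law of (X, Y, Z) is absolutely continuous with a continuous density on ℝ³. Let ρ_X denote the joint law of (Z, X) and ρ_Y the joint law of (Z, Y), and define the residuals U := F_{ρ_X}(Z, X) and V := F_{ρ_Y}(Z, Y), where F_ρ denotes the conditional CDF of ρ. Then X and Y are conditionally independent given Z (conditional independence of X and Y given the σ-algebra generated by Z) if and only if the three random variables U, V, and Z are mutually independent. -/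
/-!
Write `F z`, `G z` for the conditional distribution functions of `X`, `Y` given `Z = z`. Since
`(Z, X)` has a density, the conditional law of `X` given `Z = z` has no atoms for almost every `z`
(`ae_continuous_condCDF`), so `F z` is continuous and `F z (X)` is, given `Z = z`, uniform on
`[0, 1]` (`map_stieltjes_eq_unif`). In particular `U` and `V` are uniform and each is independent
of `Z`.

If `X` and `Y` are conditionally independent given `Z`, the law of `(Z, X, Y)` disintegrates over
the law of `Z` with fibres `law(X | z) × law(Y | z)`; the fibrewise map `(F z, G z)` sends each fibre
to the uniform law on the unit square, which does not depend on `z`, whence mutual independence.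

Conversely, the event `{X ≤ x}` is contained in `{U ≤ F Z x}` and the two have the same
probability, so they agree almost surely; likewise for `Y`. If `U`, `V`, `Z` are
independent, then `P (Z ∈ A, X ≤ x, Y ≤ y) = P (Z ∈ A, U ≤ F Z x, V ≤ G Z y)
= ∫_A F z x * G z y dP_Z(z)`, which is the conditional independence of `X` and `Y`.
-/

open MeasureTheory ProbabilityTheory Set

/-! ### Conditional laws -/

/-- The conditional law on the second coordinate given the first, as the Markov kernel whose
distribution functions are `condCDF ρ`. -/
noncomputable def condLaw (ρ : Measure (ℝ × ℝ)) : Kernel ℝ ℝ where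
  toFun z := (condCDF ρ z).measure
  measurable' := measurable_measure_condCDF ρ

lemma condLaw_apply (ρ : Measure (ℝ × ℝ)) (z : ℝ) :
    condLaw ρ z = (condCDF ρ z).measure := rfl

instance (ρ : Measure (ℝ × ℝ)) : IsMarkovKernel (condLaw ρ) :=
  ⟨fun z => instIsProbabilityMeasureCondCDF ρ z⟩

lemma fst_compProd_condLaw (ρ : Measure (ℝ × ℝ)) [IsFiniteMeasure ρ] :
    ρ.fst ⊗ₘ condLaw ρ = ρ :=
  DFunLike.congr_fun (compProd_toKernel (isCondKernelCDF_condCDF ρ)) ()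

lemma condLaw_Iic (ρ : Measure (ℝ × ℝ)) (z x : ℝ) :
    condLaw ρ z (Iic x) = ENNReal.ofReal (condCDF ρ z x) := measure_condCDF_Iic ρ z x

/-! ### Uniformity of residuals -/

/-- Probability integral transform: a continuous distribution function pushes its own measure
forward to the uniform law on `[0, 1]`. No strict monotonicity is needed: by the intermediate value
theorem a level `u ∈ (0, 1)` is attained at some `x`, and `{F < u} ⊆ (-∞, x] ⊆ {F ≤ u}`. -/
lemma map_stieltjes_eq_unif (F : StieltjesFunction ℝ)
    (h0 : Filter.Tendsto F Filter.atBot (nhds 0)) (h1 : Filter.Tendsto F Filter.atTop (nhds 1))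
    (hF : Continuous F) : F.measure.map F = volume.restrict (Icc (0 : ℝ) 1) := by
  have : IsProbabilityMeasure F.measure := F.isProbabilityMeasure h0 h1
  have hle1 (x) : F x ≤ 1 := F.mono.ge_of_tendsto h1 x
  have hge0 (x) : 0 ≤ F x := F.mono.le_of_tendsto h0 x
  have key (u : ℝ) (hu0 : 0 < u) (hu1 : u < 1) :
      ENNReal.ofReal u ≤ F.measure {x | F x ≤ u} ∧ F.measure {x | F x < u} ≤ ENNReal.ofReal u := by
    obtain ⟨x, hx⟩ : u ∈ range F := by
      refine mem_range_of_exists_le_of_exists_ge hF ?_ ?_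
      · exact ((h0.eventually (gt_mem_nhds hu0)).exists).imp fun _ h => h.le
      · exact ((h1.eventually (lt_mem_nhds hu1)).exists).imp fun _ h => h.le
    have hIic : F.measure (Iic x) = ENNReal.ofReal u := by
      rw [F.measure_Iic h0, sub_zero, hx]
    rw [← hIic]
    refine ⟨measure_mono fun y hy => ?_, measure_mono fun y hy => ?_⟩
    · exact (F.mono hy).trans hx.le
    · by_contra hxy
      exact absurd (F.mono (le_of_lt (not_le.1 hxy))) (by rw [hx]; exact not_le.2 hy)
  have eqn (u : ℝ) (hu0 : 0 ≤ u) (hu1 : u < 1) :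
      F.measure {x | F x ≤ u} = ENNReal.ofReal u := by
    refine le_antisymm ?_ ?_
    · have hev : ∀ᶠ v in nhdsWithin u (Ioi u), F.measure {x | F x ≤ u} ≤ ENNReal.ofReal v := by
        filter_upwards [Ioo_mem_nhdsGT hu1] with v hv
        refine (measure_mono fun y hy => ?_).trans (key v (hu0.trans_lt hv.1) hv.2).2
        exact lt_of_le_of_lt hy hv.1
      refine ge_of_tendsto ?_ hev
      exact (ENNReal.continuous_ofReal.tendsto u).mono_left nhdsWithin_le_nhds
    · rcases hu0.eq_or_lt with rfl | hu0
      · simp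
      · exact (key u hu0 hu1).1
  have hp : IsProbabilityMeasure (F.measure.map F) :=
    Measure.isProbabilityMeasure_map hF.measurable.aemeasurable
  refine Measure.ext_of_Iic _ _ fun u => ?_
  rw [Measure.map_apply hF.measurable measurableSet_Iic, Measure.restrict_apply measurableSet_Iic]
  change F.measure {x | F x ≤ u} = _
  rcases lt_or_ge u 0 with hu | hu
  · have e1 : {x | F x ≤ u} = ∅ := by
      ext x; simpa using hu.trans_le (hge0 x)
    have e2 : Iic u ∩ Icc (0 : ℝ) 1 = ∅ := by
      ext x; simp; intro a b; linarith
    simp [e1, e2]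
  rcases lt_or_ge u 1 with hu1 | hu1
  · have e2 : Iic u ∩ Icc (0 : ℝ) 1 = Icc 0 u := by
      ext x; simp; constructor
      · rintro ⟨a, b, c⟩; exact ⟨b, a⟩
      · rintro ⟨a, b⟩; exact ⟨b, a, b.trans hu1.le⟩
    rw [eqn u hu hu1, e2, Real.volume_Icc, sub_zero]
  · have e1 : {x | F x ≤ u} = univ := by
      ext x; simpa using (hle1 x).trans hu1
    have e2 : Iic u ∩ Icc (0 : ℝ) 1 = Icc 0 1 :=
      inter_eq_right.2 fun x hx => hx.2.trans hu1
    simp [e1, e2]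

/-- The atoms of the conditional laws form a set with countable, hence Lebesgue null, sections; so
it is `ρ`-null when `ρ` is absolutely continuous, which says that almost no conditional law has
an atom. -/
lemma ae_continuous_condCDF (ρ : Measure (ℝ × ℝ)) [IsFiniteMeasure ρ] (hρ : ρ ≪ volume) :
    ∀ᵐ z ∂ρ.fst, Continuous (condCDF ρ z) := by
  set D : Set (ℝ × ℝ) := {p | 0 < condLaw ρ p.1 {p.2}} with hD
  have hDm : MeasurableSet D := by
    have hS : MeasurableSet {q : (ℝ × ℝ) × ℝ | q.2 = q.1.2} :=
      measurableSet_eq_fun (by fun_prop) (by fun_prop)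
    have h := Kernel.measurable_kernel_prodMk_left
      (κ := (condLaw ρ).comap Prod.fst (measurable_fst (α := ℝ) (β := ℝ))) hS
    exact measurableSet_lt measurable_const h
  have hcount (z : ℝ) : (Prod.mk z ⁻¹' D).Countable :=
    Measure.countable_meas_level_set_pos (μ := condLaw ρ z) measurable_id
  have hD0 : ρ D = 0 := by
    refine hρ ?_
    rw [Measure.volume_eq_prod, Measure.prod_apply hDm]
    simp [fun z => (hcount z).measure_zero volume]
  rw [← fst_compProd_condLaw ρ, Measure.compProd_apply hDm,
    lintegral_eq_zero_iff (Kernel.measurable_kernel_prodMk_left hDm)] at hD0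
  filter_upwards [hD0] with z hz
  have hz' (x : ℝ) : condLaw ρ z {x} = 0 := by
    by_contra hne
    refine hne (measure_mono_null ?_ hz)
    rintro _ rfl
    exact pos_iff_ne_zero.2 hne
  refine continuous_iff_continuousAt.2 fun x => ?_
  rw [(condCDF ρ z).mono.continuousAt_iff_leftLim_eq_rightLim, StieltjesFunction.rightLim_eq]
  have hx := hz' x
  rw [condLaw_apply, StieltjesFunction.measure_singleton, ENNReal.ofReal_eq_zero] at hx
  exact le_antisymm ((condCDF ρ z).mono.leftLim_le le_rfl) (by linarith)

/-- Conditionally on the first coordinate, the residual is uniform. -/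
lemma ae_condLaw_map (ρ : Measure (ℝ × ℝ)) [IsFiniteMeasure ρ] (hρ : ρ ≪ volume) :
    ∀ᵐ z ∂ρ.fst, (condLaw ρ z).map (condCDF ρ z) = volume.restrict (Icc (0 : ℝ) 1) := by
  filter_upwards [ae_continuous_condCDF ρ hρ] with z hz
  exact map_stieltjes_eq_unif _ (tendsto_condCDF_atBot ρ z) (tendsto_condCDF_atTop ρ z) hz

lemma map_residual (ρ : Measure (ℝ × ℝ)) [IsFiniteMeasure ρ] (hρ : ρ ≪ volume) :
    ρ.map (fun p => (p.1, condCDF ρ p.1 p.2))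
      = ρ.fst.prod (volume.restrict (Icc (0 : ℝ) 1)) := by
  have hm : Measurable fun p : ℝ × ℝ => (p.1, condCDF ρ p.1 p.2) :=
    measurable_fst.prodMk (measurable_uncurry_condCDF ρ)
  ext s hs
  rw [Measure.map_apply hm hs, Measure.prod_apply hs]
  conv_lhs => rw [← fst_compProd_condLaw ρ]
  rw [Measure.compProd_apply (by rw [fst_compProd_condLaw]; exact hm hs), fst_compProd_condLaw]
  refine lintegral_congr_ae ?_
  filter_upwards [ae_condLaw_map ρ hρ] with z hz
  rw [← hz, Measure.map_apply (condCDF ρ z).mono.measurable (measurable_prodMk_left hs)]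
  rfl

lemma unif_Iic {u : ℝ} (h1 : u ≤ 1) :
    volume.restrict (Icc (0 : ℝ) 1) (Iic u) = ENNReal.ofReal u := by
  have e2 : Iic u ∩ Icc (0 : ℝ) 1 = Icc 0 u := by
    ext x
    simp only [mem_inter_iff, mem_Iic, mem_Icc]
    exact ⟨fun h => ⟨h.2.1, h.1⟩, fun h => ⟨h.2, h.1, h.2.trans h1⟩⟩
  rw [Measure.restrict_apply measurableSet_Iic, e2, Real.volume_Icc, sub_zero]

/-! ### Joint laws and conditional independence -/

/-- A finite measure on `ℝ³` is determined by its values on products of a Borel set and two rays. -/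
lemma ext_prod_Iic_Iic {μ ν : Measure (ℝ × ℝ × ℝ)} [IsFiniteMeasure μ]
    (h : ∀ (A : Set ℝ) (x y : ℝ), MeasurableSet A →
      μ (A ×ˢ Iic x ×ˢ Iic y) = ν (A ×ˢ Iic x ×ˢ Iic y)) : μ = ν := by
  have m1 : Measurable fun p : ℝ × ℝ × ℝ => p.2.1 := by fun_prop
  have m2 : Measurable fun p : ℝ × ℝ × ℝ => p.2.2 := by fun_prop
  have res1 (m : Measure (ℝ × ℝ × ℝ)) {A B C : Set ℝ} (hB : MeasurableSet B) :
      (m.restrict (A ×ˢ univ ×ˢ C)).map (fun p => p.2.1) B = m (A ×ˢ B ×ˢ C) := by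
    rw [Measure.map_apply m1 hB, Measure.restrict_apply (m1 hB)]
    congr 1
    ext p
    simp only [mem_inter_iff, mem_preimage, mem_prod, mem_univ, true_and]
    tauto
  have res2 (m : Measure (ℝ × ℝ × ℝ)) {A B C : Set ℝ} (hC : MeasurableSet C) :
      (m.restrict (A ×ˢ B ×ˢ univ)).map (fun p => p.2.2) C = m (A ×ˢ B ×ˢ C) := by
    rw [Measure.map_apply m2 hC, Measure.restrict_apply (m2 hC)]
    congr 1
    ext p
    simp only [mem_inter_iff, mem_preimage, mem_prod, mem_univ, and_true]
    tauto
  have step1 {A B : Set ℝ} (y : ℝ) (hA : MeasurableSet A) (hB : MeasurableSet B) :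
      μ (A ×ˢ B ×ˢ Iic y) = ν (A ×ˢ B ×ˢ Iic y) := by
    rw [← res1 μ hB, ← res1 ν hB]
    congr 1
    refine Measure.ext_of_Iic _ _ fun x => ?_
    rw [res1 μ measurableSet_Iic, res1 ν measurableSet_Iic, h A x y hA]
  refine Measure.ext_prod₃_iff.2 fun {A B C} hA hB hC => ?_
  rw [← res2 μ hC, ← res2 ν hC]
  congr 1
  refine Measure.ext_of_Iic _ _ fun y => ?_
  rw [res2 μ measurableSet_Iic, res2 ν measurableSet_Iic, step1 y hA hB]

/-- Conditional independence given `Z`, expressed with the conditional laws defined by `condCDF`. -/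
lemma condIndepFun_iff_map_eq_compProd {Ω : Type*} [MeasurableSpace Ω] [StandardBorelSpace Ω]
    (P : Measure Ω) [IsProbabilityMeasure P]
    {X Y Z : Ω → ℝ} (hX : Measurable X) (hY : Measurable Y) (hZ : Measurable Z) :
    CondIndepFun (MeasurableSpace.comap Z inferInstance) hZ.comap_le X Y P ↔
      P.map (fun ω => (Z ω, X ω, Y ω)) = P.map Z ⊗ₘ
        (condLaw (P.map fun ω => (Z ω, X ω)) ×ₖ condLaw (P.map fun ω => (Z ω, Y ω))) := by
  have hdis {W : Ω → ℝ} (hW : Measurable W) :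
      condDistrib W Z P =ᵐ[P.map Z] condLaw (P.map fun ω => (Z ω, W ω)) := by
    refine condDistrib_ae_eq_of_measure_eq_compProd Z hW.aemeasurable ?_
    conv_lhs => rw [← fst_compProd_condLaw (P.map fun ω => (Z ω, W ω))]
    rw [Measure.fst_map_prodMk hW]
  rw [condIndepFun_iff_map_prod_eq_prod_condDistrib_prod_condDistrib hX hY hZ,
    ← Measure.compProd_eq_comp_prod]
  have : P.map Z ⊗ₘ (condDistrib X Z P ×ₖ condDistrib Y Z P) = P.map Z ⊗ₘ
        (condLaw (P.map fun ω => (Z ω, X ω)) ×ₖ condLaw (P.map fun ω => (Z ω, Y ω))) := by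
    refine Measure.compProd_congr ?_
    filter_upwards [hdis hX, hdis hY] with z h1 h2
    rw [Kernel.prod_apply, Kernel.prod_apply, h1, h2]
  rw [this]

/-- `{W ≤ x}` and `{residual ≤ F Z x}` are nested events of equal probability. -/
lemma le_ae_iff_residual_le {Ω : Type*} [MeasurableSpace Ω]
    (P : Measure Ω) [IsProbabilityMeasure P] {W Z : Ω → ℝ} (hW : Measurable W) (hZ : Measurable Z)
    {ρ : Measure (ℝ × ℝ)} (hρ : ρ = P.map fun ω => (Z ω, W ω)) (hac : ρ ≪ volume) (x : ℝ) :
    ∀ᵐ ω ∂P, W ω ≤ x ↔ condCDF ρ (Z ω) (W ω) ≤ condCDF ρ (Z ω) x := by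
  have hpm : Measurable fun ω => (Z ω, W ω) := hZ.prodMk hW
  have : IsProbabilityMeasure ρ := hρ ▸ Measure.isProbabilityMeasure_map hpm.aemeasurable
  have hmc := measurable_uncurry_condCDF ρ
  have hmr : Measurable fun p : ℝ × ℝ => (p.1, condCDF ρ p.1 p.2) := measurable_fst.prodMk hmc
  have hS : MeasurableSet {p : ℝ × ℝ | p.2 ≤ condCDF ρ p.1 x} :=
    measurableSet_le measurable_snd ((measurable_condCDF ρ x).comp measurable_fst)
  have e1 : P {ω | W ω ≤ x} = ∫⁻ z, ENNReal.ofReal (condCDF ρ z x) ∂ρ.fst := by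
    rw [lintegral_condCDF, hρ, Measure.map_apply hpm (MeasurableSet.univ.prod measurableSet_Iic)]
    congr 1
    ext ω
    simp
  have e2 : P {ω | condCDF ρ (Z ω) (W ω) ≤ condCDF ρ (Z ω) x}
      = ∫⁻ z, ENNReal.ofReal (condCDF ρ z x) ∂ρ.fst := by
    have : P {ω | condCDF ρ (Z ω) (W ω) ≤ condCDF ρ (Z ω) x}
        = ρ.map (fun p => (p.1, condCDF ρ p.1 p.2)) {p : ℝ × ℝ | p.2 ≤ condCDF ρ p.1 x} := by
      rw [Measure.map_apply hmr hS]
      conv_rhs => rw [hρ]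
      rw [Measure.map_apply hpm (by rw [← hρ]; exact hmr hS), ← hρ]
      rfl
    rw [this, map_residual ρ hac, Measure.prod_apply hS]
    refine lintegral_congr fun z => ?_
    exact unif_Iic (condCDF_le_one ρ z x)
  have hae : ({ω | W ω ≤ x} : Set Ω) =ᵐ[P] {ω | condCDF ρ (Z ω) (W ω) ≤ condCDF ρ (Z ω) x} :=
    ae_eq_of_subset_of_measure_ge (fun ω hω => (condCDF ρ (Z ω)).mono hω) (by rw [e1, e2])
      (measurableSet_le hW measurable_const).nullMeasurableSet (measure_ne_top _ _)
  filter_upwards [hae] with ω hω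
  exact iff_of_eq hω

/-- A residual is uniform on `[0, 1]`. -/
lemma map_residual_eq_unif {Ω : Type*} [MeasurableSpace Ω]
    (P : Measure Ω) [IsProbabilityMeasure P] {W Z : Ω → ℝ} (hW : Measurable W) (hZ : Measurable Z)
    {ρ : Measure (ℝ × ℝ)} (hρ : ρ = P.map fun ω => (Z ω, W ω)) (hac : ρ ≪ volume) :
    P.map (fun ω => condCDF ρ (Z ω) (W ω)) = volume.restrict (Icc (0 : ℝ) 1) := by
  have hpm : Measurable fun ω => (Z ω, W ω) := hZ.prodMk hW
  have : IsProbabilityMeasure ρ := hρ ▸ Measure.isProbabilityMeasure_map hpm.aemeasurable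
  have hmc := measurable_uncurry_condCDF ρ
  have hmr : Measurable fun p : ℝ × ℝ => (p.1, condCDF ρ p.1 p.2) := measurable_fst.prodMk hmc
  have h := congrArg Measure.snd (map_residual ρ hac)
  rw [Measure.snd_prod, Measure.snd_map_prodMk measurable_fst] at h
  rw [← h]
  conv_rhs => rw [hρ]
  rw [Measure.map_map (by rw [← hρ]; exact hmc) hpm, ← hρ]
  rfl

/-- Mutual independence of `(U, V, Z)` in terms of the law of the reordered triple `(Z, U, V)`. -/
lemma map_eq_prod_iff_reorder {Ω : Type*} [MeasurableSpace Ω]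
    (P : Measure Ω) [IsProbabilityMeasure P] {U V Z : Ω → ℝ} (hU : Measurable U)
    (hV : Measurable V) (hZ : Measurable Z) :
    P.map (fun ω => (U ω, V ω, Z ω)) = (P.map U).prod ((P.map V).prod (P.map Z)) ↔
      P.map (fun ω => (Z ω, U ω, V ω)) = (P.map Z).prod ((P.map U).prod (P.map V)) := by
  have hset (A B C : Set ℝ) : (fun ω => (U ω, V ω, Z ω)) ⁻¹' (B ×ˢ C ×ˢ A)
      = (fun ω => (Z ω, U ω, V ω)) ⁻¹' (A ×ˢ B ×ˢ C) := by
    ext ω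
    simp only [mem_preimage, mem_prod]
    tauto
  have m1 : Measurable fun ω => (U ω, V ω, Z ω) := by fun_prop
  have m2 : Measurable fun ω => (Z ω, U ω, V ω) := by fun_prop
  rw [Measure.ext_prod₃_iff, Measure.ext_prod₃_iff]
  constructor
  · intro h A B C hA hB hC
    have := h hB hC hA
    rw [Measure.map_apply m1 (hB.prod (hC.prod hA)), hset,
      ← Measure.map_apply m2 (hA.prod (hB.prod hC))] at this
    rw [this]
    simp only [Measure.prod_prod]
    ring
  · intro h B C A hB hC hA
    have := h hA hB hC
    rw [Measure.map_apply m2 (hA.prod (hB.prod hC)), ← hset,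
      ← Measure.map_apply m1 (hB.prod (hC.prod hA))] at this
    rw [this]
    simp only [Measure.prod_prod]
    ring

/-- Lemma 3.1: if `(X, Y, Z)` has a continuous joint density on `ℝ³`, `ρX` is the joint law of
`(Z, X)`, `ρY` is the joint law of `(Z, Y)`, and `U = condCDF ρX Z X`, `V = condCDF ρY Z Y` are
the nonparametric residuals, then `X` and `Y` are conditionally independent given (the σ-algebra
generated by) `Z` if and only if `U`, `V` and `Z` are mutually independent, i.e., the joint law
of `(U, V, Z)` is the product of the three marginal laws. -/
theorem stmt6 {Ω : Type*} [MeasurableSpace Ω] [StandardBorelSpace Ω]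
    (P : Measure Ω) [IsProbabilityMeasure P]
    (X Y Z : Ω → ℝ) (hX : Measurable X) (hY : Measurable Y) (hZ : Measurable Z)
    (f : ℝ × ℝ × ℝ → ℝ) (hf_cont : Continuous f)
    (hdens : Measure.map (fun ω => (X ω, Y ω, Z ω)) P
      = volume.withDensity (fun p => ENNReal.ofReal (f p)))
    (ρX ρY : Measure (ℝ × ℝ))
    (hρX : ρX = Measure.map (fun ω => (Z ω, X ω)) P)
    (hρY : ρY = Measure.map (fun ω => (Z ω, Y ω)) P)
    (U V : Ω → ℝ) (hU : U = fun ω => condCDF ρX (Z ω) (X ω))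
    (hV : V = fun ω => condCDF ρY (Z ω) (Y ω)) :
    CondIndepFun (MeasurableSpace.comap Z inferInstance) hZ.comap_le X Y P
      ↔ Measure.map (fun ω => (U ω, V ω, Z ω)) P
          = (Measure.map U P).prod ((Measure.map V P).prod (Measure.map Z P)) := by
  have hpX : Measurable fun ω => (Z ω, X ω) := hZ.prodMk hX
  have hpY : Measurable fun ω => (Z ω, Y ω) := hZ.prodMk hY
  have hρXp : IsProbabilityMeasure ρX := hρX ▸ Measure.isProbabilityMeasure_map hpX.aemeasurable
  have hρYp : IsProbabilityMeasure ρY := hρY ▸ Measure.isProbabilityMeasure_map hpY.aemeasurable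
  have hfX : ρX.fst = P.map Z := by rw [hρX, Measure.fst_map_prodMk hX]
  have hfY : ρY.fst = P.map Z := by rw [hρY, Measure.fst_map_prodMk hY]
  have hacP : P.map (fun ω => (X ω, Y ω, Z ω)) ≪ volume := by
    rw [hdens]
    exact withDensity_absolutelyContinuous _ _
  have hm3 : Measurable fun ω => (X ω, Y ω, Z ω) := by fun_prop
  -- The pairs are coordinate projections of the triple, and those are quasi measure preserving.
  have hacX : ρX ≪ volume := by
    have hq : Measure.QuasiMeasurePreserving (fun p : ℝ × ℝ × ℝ => (p.2.2, p.1)) volume volume :=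
      (Measure.quasiMeasurePreserving_snd (μ := (volume : Measure ℝ))
        (ν := (volume : Measure (ℝ × ℝ)))).comp
        ((measurePreserving_prodAssoc (volume : Measure ℝ) (volume : Measure ℝ)
          (volume : Measure ℝ)).quasiMeasurePreserving.comp
          (Measure.measurePreserving_swap (μ := (volume : Measure ℝ))
            (ν := (volume : Measure (ℝ × ℝ)))).quasiMeasurePreserving)
    have h := (hacP.map hq.measurable).trans hq.absolutelyContinuous
    rw [Measure.map_map hq.measurable hm3] at h
    rw [hρX]
    exact h
  have hacY : ρY ≪ volume := by
    have hq : Measure.QuasiMeasurePreserving (fun p : ℝ × ℝ × ℝ => (p.2.2, p.2.1)) volume volume :=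
      (Measure.measurePreserving_swap (μ := (volume : Measure ℝ))
        (ν := (volume : Measure ℝ))).quasiMeasurePreserving.comp
        (Measure.quasiMeasurePreserving_snd (μ := (volume : Measure ℝ))
            (ν := (volume : Measure (ℝ × ℝ))))
    have h := (hacP.map hq.measurable).trans hq.absolutelyContinuous
    rw [Measure.map_map hq.measurable hm3] at h
    rw [hρY]
    exact h
  have hmX := measurable_uncurry_condCDF ρX
  have hmY := measurable_uncurry_condCDF ρY
  have hUm : Measurable U := hU ▸ hmX.comp hpX
  have hVm : Measurable V := hV ▸ hmY.comp hpY
  have hUu : P.map U = volume.restrict (Icc (0 : ℝ) 1) := by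
    rw [hU]
    exact map_residual_eq_unif P hX hZ hρX hacX
  have hVu : P.map V = volume.restrict (Icc (0 : ℝ) 1) := by
    rw [hV]
    exact map_residual_eq_unif P hY hZ hρY hacY
  have hμ : IsProbabilityMeasure (P.map Z) := Measure.isProbabilityMeasure_map hZ.aemeasurable
  have hmZXY : Measurable fun ω => (Z ω, X ω, Y ω) := by fun_prop
  have hmZUV : Measurable fun ω => (Z ω, U ω, V ω) := by fun_prop
  rw [condIndepFun_iff_map_eq_compProd P hX hY hZ, map_eq_prod_iff_reorder P hUm hVm hZ,
    hUu, hVu, ← hρX, ← hρY]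
  constructor
  · intro h
    have hT : Measurable fun p : ℝ × ℝ × ℝ =>
        (p.1, condCDF ρX p.1 p.2.1, condCDF ρY p.1 p.2.2) :=
      measurable_fst.prodMk
        ((hmX.comp (measurable_fst.prodMk (measurable_fst.comp measurable_snd))).prodMk
        (hmY.comp (measurable_fst.prodMk (measurable_snd.comp measurable_snd))))
    have e : P.map (fun ω => (Z ω, U ω, V ω)) = (P.map (fun ω => (Z ω, X ω, Y ω))).map
        (fun p : ℝ × ℝ × ℝ => (p.1, condCDF ρX p.1 p.2.1, condCDF ρY p.1 p.2.2)) := by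
      rw [Measure.map_map hT hmZXY, hU, hV]
      rfl
    rw [e, h]
    ext s hs
    rw [Measure.map_apply hT hs, Measure.compProd_apply (hT hs), Measure.prod_apply hs]
    refine lintegral_congr_ae ?_
    filter_upwards [hfX ▸ ae_condLaw_map ρX hacX, hfY ▸ ae_condLaw_map ρY hacY] with z hz1 hz2
    have hF := (condCDF ρX z).mono.measurable
    have hG := (condCDF ρY z).mono.measurable
    rw [Kernel.prod_apply]
    conv_rhs => rw [← hz1]
    conv_rhs => enter [1, 2]; rw [hz1, ← hz2]
    rw [Measure.map_prod_map _ _ hF hG,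
      Measure.map_apply (hF.prodMap hG) (measurable_prodMk_left hs)]
    rfl
  · intro h
    have : IsProbabilityMeasure (P.map (fun ω => (Z ω, X ω, Y ω))) :=
      Measure.isProbabilityMeasure_map hmZXY.aemeasurable
    refine ext_prod_Iic_Iic fun A x y hA => ?_
    set S : Set (ℝ × ℝ × ℝ) :=
      {p | p.1 ∈ A ∧ p.2.1 ≤ condCDF ρX p.1 x ∧ p.2.2 ≤ condCDF ρY p.1 y} with hSdef
    have hS : MeasurableSet S :=
      (measurable_fst hA).inter
        ((measurableSet_le (measurable_fst.comp measurable_snd)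
          ((measurable_condCDF ρX x).comp measurable_fst)).inter
        (measurableSet_le (measurable_snd.comp measurable_snd)
          ((measurable_condCDF ρY y).comp measurable_fst)))
    have e1 : P.map (fun ω => (Z ω, X ω, Y ω)) (A ×ˢ Iic x ×ˢ Iic y)
        = P.map (fun ω => (Z ω, U ω, V ω)) S := by
      rw [Measure.map_apply hmZXY (hA.prod (measurableSet_Iic.prod measurableSet_Iic)),
        Measure.map_apply hmZUV hS]
      refine measure_congr ?_
      filter_upwards [le_ae_iff_residual_le P hX hZ hρX hacX x,
        le_ae_iff_residual_le P hY hZ hρY hacY y] with ω h1 h2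
      refine propext ?_
      change (Z ω ∈ A ∧ X ω ≤ x ∧ Y ω ≤ y) ↔
        (Z ω ∈ A ∧ U ω ≤ condCDF ρX (Z ω) x ∧ V ω ≤ condCDF ρY (Z ω) y)
      rw [h1, h2, hU, hV]
    rw [e1, h, Measure.prod_apply hS,
      Measure.compProd_apply_prod hA (measurableSet_Iic.prod measurableSet_Iic),
      ← lintegral_indicator hA]
    refine lintegral_congr fun z => ?_
    by_cases hz : z ∈ A
    · have e : Prod.mk z ⁻¹' S = Iic (condCDF ρX z x) ×ˢ Iic (condCDF ρY z y) := by
        ext p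
        simp only [hSdef, mem_preimage, mem_ofPred_eq, hz, true_and, mem_prod, mem_Iic]
      rw [indicator_of_mem hz, e, Measure.prod_prod, Kernel.prod_apply, Measure.prod_prod,
        condLaw_Iic, condLaw_Iic, unif_Iic (condCDF_le_one _ _ _),
        unif_Iic (condCDF_le_one _ _ _)]
    · have e : Prod.mk z ⁻¹' S = ∅ := by
        ext p
        simp [hSdef, hz]
      rw [indicator_of_notMem hz, e, measure_empty]
end

section
/- Let (Ω, ℱ, P) be a probability space and X, Y, Z : Ω → ℝ random variables such that the joint law of (X, Y, Z) is absolutely continuous with a continuous density on ℝ³, and suppose the CDF F_Z of Z is continuous. Let ρ_X denote the joint law of (Z, X) and ρ_Y the joint law of (Z, Y), and set W := (F_{ρ_X}(Z, X), F_{ρ_Y}(Z, Y), F_Z(Z)). Then X and Y are conditionally independent given Z (conditional independence given the σ-algebra generated by Z) if and only if the law of W is the uniform distribution on [0,1]³. -/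
/-!
Write `μ` for the law of `Z`, `κ` and `η` for the kernels `z ↦ (condCDF ρX z).measure` and
`z ↦ (condCDF ρY z).measure`, and `π` for the law of `(Z, X, Y)`. Since `κ` and `η` are versions of
the conditional laws of `X` and `Y` given `Z`, conditional independence means
`π = μ ⊗ₘ (κ ×ₖ η)`, while the law of `W` is the image of `π` under
`Φ (z, x, y) = (cdf (κ z) x, cdf (η z) y, cdf μ z)`.

The joint density makes `κ z` and `η z` atomless for almost every `z`
(`ae_continuous_cdf`), so the probability integral transform (`map_cdf_eq_uniform`), applied in
each fibre and then to `μ`, shows that `Φ` sends `μ ⊗ₘ (κ ×ₖ η)` to the uniform law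
(`map_uniform`). This gives one direction.

Conversely, both `π` and `μ ⊗ₘ (κ ×ₖ η)` are then mapped by `Φ` to the same law, and `Φ` loses no
information about either of them (`eq_of_map_eq`): a continuous CDF `F` satisfies
`F x ≤ F a ↔ x ≤ a` for almost every `x` (`ae_le_of_cdf_le`), so, up to null sets, events
`{z ≤ c}`, `{x ≤ a}`, `{y ≤ b}` are determined by `Φ`. The two measures have the same `(z, x)` and
`(z, y)` marginals, so these almost sure equivalences hold for both.
-/

open MeasureTheory ProbabilityTheory Set Filter Topology

lemma generateFrom_range_Iic_real :
    MeasurableSpace.generateFrom (range (Iic : ℝ → Set ℝ)) = Real.measurableSpace :=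
  (borel_eq_generateFrom_Iic ℝ).symm

lemma isCountablySpanning_range_Iic_real : IsCountablySpanning (range (Iic : ℝ → Set ℝ)) :=
  ⟨fun n : ℕ => Iic (n : ℝ), fun n => mem_range_self _, iUnion_Iic_of_not_bddAbove_range
    (by simpa [BddAbove, upperBounds, Set.Nonempty] using fun x => exists_nat_gt x)⟩

/-- Probability integral transform. -/
lemma map_cdf_eq_uniform (μ : Measure ℝ) [IsProbabilityMeasure μ] (hc : Continuous (cdf μ)) :
    μ.map (cdf μ) = volume.restrict (Icc (0 : ℝ) 1) := by
  have hfin : IsProbabilityMeasure (μ.map (cdf μ)) :=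
    Measure.isProbabilityMeasure_map hc.measurable.aemeasurable
  refine Measure.ext_of_Iic _ _ fun t => ?_
  rw [Measure.map_apply hc.measurable measurableSet_Iic,
    Measure.restrict_apply measurableSet_Iic]
  rcases lt_or_ge t 0 with ht0 | ht0
  · have h1 : cdf μ ⁻¹' Iic t = ∅ := by
      ext x; simpa using ht0.trans_le (cdf_nonneg μ x)
    have h2 : Iic t ∩ Icc (0 : ℝ) 1 = ∅ := by
      ext x; simp only [mem_inter_iff, mem_Iic, mem_Icc, mem_empty_iff_false, iff_false]
      intro h; linarith [h.1, h.2.1]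
    rw [h1, h2]; simp
  rcases le_or_gt 1 t with ht1 | ht1
  · have h1 : cdf μ ⁻¹' Iic t = univ := by
      ext x; simpa using (cdf_le_one μ x).trans ht1
    have h2 : Iic t ∩ Icc (0 : ℝ) 1 = Icc 0 1 := by
      ext x; simp only [mem_inter_iff, mem_Iic, mem_Icc, and_iff_right_iff_imp]
      intro h; linarith [h.2]
    rw [h1, h2]; simp
  have h2 : Iic t ∩ Icc (0 : ℝ) 1 = Icc 0 t := by
    ext x; simp only [mem_inter_iff, mem_Iic, mem_Icc]
    exact ⟨fun h => ⟨h.2.1, h.1⟩, fun h => ⟨h.2, h.1, h.2.trans ht1.le⟩⟩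
  rw [h2, Real.volume_Icc, sub_zero]
  rcases (cdf μ ⁻¹' Iic t).eq_empty_or_nonempty with he | hne
  · -- an empty sublevel set forces `t = 0`, because the CDF tends to `0` at `-∞`
    have : t = 0 := by
      refine le_antisymm ?_ ht0
      refine ge_of_tendsto (tendsto_cdf_atBot μ) (Eventually.of_forall fun x => ?_)
      by_contra hx
      exact (he ▸ (show x ∈ cdf μ ⁻¹' Iic t from (not_le.mp hx).le) : x ∈ (∅ : Set ℝ))
    rw [he, this]; simp
  -- the sublevel set is a closed half-line with an endpoint `m` at which the CDF equals `t`
  have hbdd : BddAbove (cdf μ ⁻¹' Iic t) := by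
    obtain ⟨b, hb⟩ := ((tendsto_cdf_atTop μ).eventually (lt_mem_nhds ht1)).exists
    refine ⟨b, fun x hx => ?_⟩
    by_contra hlt
    exact absurd (hb.trans_le (monotone_cdf μ (not_le.mp hlt).le)) (not_lt.mpr hx)
  obtain ⟨m, hm, hmax⟩ : ∃ m, m ∈ cdf μ ⁻¹' Iic t ∧ ∀ x ∈ cdf μ ⁻¹' Iic t, x ≤ m :=
    ⟨_, (isClosed_Iic.preimage hc).csSup_mem hne hbdd, fun x hx => le_csSup hbdd hx⟩
  have hset : cdf μ ⁻¹' Iic t = Iic m :=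
    Subset.antisymm hmax fun x hx => (monotone_cdf μ hx).trans hm
  have hmt : cdf μ m = t := by
    refine le_antisymm hm ?_
    have : Tendsto (cdf μ) (𝓝[>] m) (𝓝 (cdf μ m)) := hc.continuousAt.mono_left inf_le_left
    refine ge_of_tendsto this ?_
    filter_upwards [self_mem_nhdsWithin] with x hx
    by_contra hlt
    exact absurd (hmax x (not_le.mp hlt).le) (not_le.mpr hx)
  rw [hset, ← ofReal_cdf, hmt]

/-- A continuous CDF is strictly increasing up to null sets: the half-line `Iic a` is contained in
`{x | cdf μ x ≤ cdf μ a}`, and both have mass `cdf μ a`. -/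
lemma ae_le_of_cdf_le (μ : Measure ℝ) [IsProbabilityMeasure μ] (hc : Continuous (cdf μ))
    (a : ℝ) : ∀ᵐ x ∂μ, cdf μ x ≤ cdf μ a → x ≤ a := by
  have h1 : μ (cdf μ ⁻¹' Iic (cdf μ a)) = μ (Iic a) := by
    rw [← Measure.map_apply hc.measurable measurableSet_Iic, map_cdf_eq_uniform μ hc,
      Measure.restrict_apply measurableSet_Iic, ← ofReal_cdf]
    have h2 : Iic (cdf μ a) ∩ Icc (0 : ℝ) 1 = Icc 0 (cdf μ a) := by
      ext x; simp only [mem_inter_iff, mem_Iic, mem_Icc]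
      exact ⟨fun h => ⟨h.2.1, h.1⟩, fun h => ⟨h.2, h.1, h.2.trans (cdf_le_one μ a)⟩⟩
    rw [h2, Real.volume_Icc, sub_zero]
  have h3 : Iic a =ᵐ[μ] cdf μ ⁻¹' Iic (cdf μ a) :=
    ae_eq_of_subset_of_measure_ge (fun x hx => monotone_cdf μ hx) h1.le
      measurableSet_Iic.nullMeasurableSet (measure_ne_top _ _)
  filter_upwards [h3.mem_iff] with x hx h
  exact hx.mpr h

lemma continuous_cdf (μ : Measure ℝ) [IsProbabilityMeasure μ] (h : ∀ x, μ {x} = 0) :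
    Continuous (cdf μ) := by
  refine continuous_iff_continuousAt.mpr fun x => ?_
  rw [(cdf μ).mono.continuousAt_iff_leftLim_eq_rightLim, (cdf μ).rightLim_eq]
  have := (cdf μ).measure_singleton x
  rw [measure_cdf, h, eq_comm, ENNReal.ofReal_eq_zero] at this
  exact le_antisymm ((cdf μ).mono.leftLim_le le_rfl) (by linarith)

lemma measurable_cdf_kernel (κ : Kernel ℝ ℝ) [IsMarkovKernel κ] :
    Measurable fun p : ℝ × ℝ => cdf (κ p.1) p.2 := by
  have ht : MeasurableSet {q : (ℝ × ℝ) × ℝ | q.2 ≤ q.1.2} :=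
    measurableSet_le measurable_snd (measurable_snd.comp measurable_fst)
  have := (Kernel.measurable_kernel_prodMk_left (κ := κ.prodMkRight ℝ) ht).ennreal_toReal
  convert this using 2 with p
  rw [cdf_eq_real]; rfl

/-- Fibrewise probability integral transform. -/
lemma map_uniform (μ : Measure ℝ) [IsProbabilityMeasure μ] (hc : Continuous (cdf μ))
    (κ η : Kernel ℝ ℝ) [IsMarkovKernel κ] [IsMarkovKernel η]
    (hκ : ∀ᵐ z ∂μ, Continuous (cdf (κ z))) (hη : ∀ᵐ z ∂μ, Continuous (cdf (η z))) :
    (μ ⊗ₘ (κ ×ₖ η)).map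
        (fun p => (cdf (κ p.1) p.2.1, cdf (η p.1) p.2.2, cdf μ p.1))
      = (volume.restrict (Icc (0 : ℝ) 1)).prod
          ((volume.restrict (Icc (0 : ℝ) 1)).prod (volume.restrict (Icc (0 : ℝ) 1))) := by
  have hmκ := measurable_cdf_kernel κ
  have hmη := measurable_cdf_kernel η
  have hm : Measurable fun p : ℝ × ℝ × ℝ =>
      (cdf (κ p.1) p.2.1, cdf (η p.1) p.2.2, cdf μ p.1) :=
    (hmκ.comp (f := fun p : ℝ × ℝ × ℝ => (p.1, p.2.1)) (by fun_prop)).prodMk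
      ((hmη.comp (f := fun p : ℝ × ℝ × ℝ => (p.1, p.2.2)) (by fun_prop)).prodMk
        (hc.measurable.comp measurable_fst))
  refine Measure.ext_prod₃ fun {s t u} hs ht hu => ?_
  rw [Measure.map_apply hm (hs.prod (ht.prod hu)),
    Measure.compProd_apply (hm (hs.prod (ht.prod hu))), Measure.prod_prod, Measure.prod_prod]
  set U : Measure ℝ := volume.restrict (Icc (0 : ℝ) 1) with hU
  have key : ∀ᵐ z ∂μ, (κ ×ₖ η) z (Prod.mk z ⁻¹' ((fun p : ℝ × ℝ × ℝ =>
      (cdf (κ p.1) p.2.1, cdf (η p.1) p.2.2, cdf μ p.1)) ⁻¹' s ×ˢ t ×ˢ u))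
      = (cdf μ ⁻¹' u).indicator (fun _ => U s * U t) z := by
    filter_upwards [hκ, hη] with z h1 h2
    by_cases hz : z ∈ cdf μ ⁻¹' u
    · rw [indicator_of_mem hz, hU, ← map_cdf_eq_uniform (κ z) h1]
      nth_rw 2 [map_cdf_eq_uniform (κ z) h1]
      rw [← map_cdf_eq_uniform (η z) h2, Measure.map_apply h1.measurable hs,
        Measure.map_apply h2.measurable ht, ← Kernel.prod_apply_prod]
      congr 1
      ext p
      simp only [mem_preimage, mem_prod] at hz ⊢
      tauto
    · rw [indicator_of_notMem hz]
      convert measure_empty (μ := (κ ×ₖ η) z)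
      ext p
      simp only [mem_preimage, mem_prod, mem_empty_iff_false] at hz ⊢
      tauto
  rw [lintegral_congr_ae key, lintegral_indicator_const (hc.measurable hu),
    ← Measure.map_apply hc.measurable hu, map_cdf_eq_uniform μ hc, ← hU, mul_assoc]

/-- A law `π` of `(z, x, y)` is determined by the law of `(F z x, G z y, H z)` when the functions
involved are monotone, and injective in the sense that, almost surely, `H z ≤ H a` implies `z ≤ a`,
and likewise for `F z` and `G z`. One first recovers the law of `(z, F z x, G z y)`, in which the
thresholds `F z a` and `G z b` are measurable functions of the first coordinate. -/
lemma eq_of_map_eq {F G : ℝ → ℝ → ℝ} {H : ℝ → ℝ}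
    (hF : Measurable fun p : ℝ × ℝ => F p.1 p.2) (hG : Measurable fun p : ℝ × ℝ => G p.1 p.2)
    (hH : Measurable H) (hFm : ∀ z, Monotone (F z)) (hGm : ∀ z, Monotone (G z))
    (hHm : Monotone H)
    (π π' : Measure (ℝ × ℝ × ℝ)) [IsProbabilityMeasure π] [IsProbabilityMeasure π']
    (h1 : ∀ a, ∀ᵐ p ∂π, F p.1 p.2.1 ≤ F p.1 a → p.2.1 ≤ a)
    (h1' : ∀ a, ∀ᵐ p ∂π', F p.1 p.2.1 ≤ F p.1 a → p.2.1 ≤ a)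
    (h2 : ∀ a, ∀ᵐ p ∂π, G p.1 p.2.2 ≤ G p.1 a → p.2.2 ≤ a)
    (h2' : ∀ a, ∀ᵐ p ∂π', G p.1 p.2.2 ≤ G p.1 a → p.2.2 ≤ a)
    (h3 : ∀ a, ∀ᵐ p ∂π, H p.1 ≤ H a → p.1 ≤ a)
    (h3' : ∀ a, ∀ᵐ p ∂π', H p.1 ≤ H a → p.1 ≤ a)
    (h : π.map (fun p => (F p.1 p.2.1, G p.1 p.2.2, H p.1))
      = π'.map (fun p => (F p.1 p.2.1, G p.1 p.2.2, H p.1))) : π = π' := by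
  have hF1 : Measurable fun p : ℝ × ℝ × ℝ => F p.1 p.2.1 :=
    hF.comp (f := fun p : ℝ × ℝ × ℝ => (p.1, p.2.1)) (by fun_prop)
  have hG1 : Measurable fun p : ℝ × ℝ × ℝ => G p.1 p.2.2 :=
    hG.comp (f := fun p : ℝ × ℝ × ℝ => (p.1, p.2.2)) (by fun_prop)
  have hΦ : Measurable fun p : ℝ × ℝ × ℝ => (F p.1 p.2.1, G p.1 p.2.2, H p.1) :=
    hF1.prodMk (hG1.prodMk (hH.comp measurable_fst))
  have hT : Measurable fun p : ℝ × ℝ × ℝ => (p.1, F p.1 p.2.1, G p.1 p.2.2) :=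
    measurable_fst.prodMk (hF1.prodMk hG1)
  have hTeq : π.map (fun p => (p.1, F p.1 p.2.1, G p.1 p.2.2))
      = π'.map (fun p => (p.1, F p.1 p.2.1, G p.1 p.2.2)) := by
    refine Measure.ext_prod₃ fun {s t u} hs ht hu => ?_
    have hE : MeasurableSet {p : ℝ × ℝ × ℝ | F p.1 p.2.1 ∈ t ∧ G p.1 p.2.2 ∈ u} :=
      (hF1 ht).inter (hG1 hu)
    have hν : (π.restrict {p | F p.1 p.2.1 ∈ t ∧ G p.1 p.2.2 ∈ u}).map Prod.fst
        = (π'.restrict {p | F p.1 p.2.1 ∈ t ∧ G p.1 p.2.2 ∈ u}).map Prod.fst := by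
      refine Measure.ext_of_Iic _ _ fun c => ?_
      rw [Measure.map_apply measurable_fst measurableSet_Iic,
        Measure.map_apply measurable_fst measurableSet_Iic,
        Measure.restrict_apply (measurable_fst measurableSet_Iic),
        Measure.restrict_apply (measurable_fst measurableSet_Iic)]
      have aux : ∀ (σ : Measure (ℝ × ℝ × ℝ)),
          (∀ᵐ p ∂σ, H p.1 ≤ H c → p.1 ≤ c) →
          σ (Prod.fst ⁻¹' Iic c ∩ {p | F p.1 p.2.1 ∈ t ∧ G p.1 p.2.2 ∈ u})
          = σ.map (fun p => (F p.1 p.2.1, G p.1 p.2.2, H p.1)) (t ×ˢ u ×ˢ Iic (H c)) := by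
        intro σ hσ
        rw [Measure.map_apply hΦ (ht.prod (hu.prod measurableSet_Iic))]
        refine measure_congr ?_
        filter_upwards [hσ] with p hp
        refine propext ?_
        change (p.1 ≤ c ∧ F p.1 p.2.1 ∈ t ∧ G p.1 p.2.2 ∈ u) ↔
          (F p.1 p.2.1 ∈ t ∧ G p.1 p.2.2 ∈ u ∧ H p.1 ≤ H c)
        have := @hHm p.1 c
        tauto
      rw [aux π (h3 c), aux π' (h3' c), h]
    have hs' := congrArg (fun m => m s) hν
    simp only [Measure.map_apply measurable_fst hs,
      Measure.restrict_apply (measurable_fst hs)] at hs'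
    rw [Measure.map_apply hT (hs.prod (ht.prod hu)), Measure.map_apply hT (hs.prod (ht.prod hu))]
    exact hs'
  have hgen : (inferInstance : MeasurableSpace (ℝ × ℝ × ℝ)) = MeasurableSpace.generateFrom
      (image2 (· ×ˢ ·) (range Iic) (image2 (· ×ˢ ·) (range Iic) (range Iic))) := by
    have hspan := isCountablySpanning_range_Iic_real
    exact (generateFrom_eq_prod generateFrom_range_Iic_real
      (generateFrom_eq_prod generateFrom_range_Iic_real generateFrom_range_Iic_real hspan hspan)
      hspan (hspan.prod hspan)).symm
  refine ext_of_generate_finite _ hgen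
    (isPiSystem_Iic.prod (isPiSystem_Iic.prod isPiSystem_Iic)) ?_ (by simp)
  rintro _ ⟨_, ⟨c, rfl⟩, _, ⟨_, ⟨a, rfl⟩, _, ⟨b, rfl⟩, rfl⟩, rfl⟩
  have hS : MeasurableSet {q : ℝ × ℝ × ℝ | q.1 ≤ c ∧ q.2.1 ≤ F q.1 a ∧ q.2.2 ≤ G q.1 b} := by
    refine (measurableSet_le measurable_fst measurable_const).inter
      ((measurableSet_le measurable_snd.fst ?_).inter (measurableSet_le measurable_snd.snd ?_))
    · exact hF.comp (f := fun p : ℝ × ℝ × ℝ => (p.1, a)) (by fun_prop)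
    · exact hG.comp (f := fun p : ℝ × ℝ × ℝ => (p.1, b)) (by fun_prop)
  have aux : ∀ (σ : Measure (ℝ × ℝ × ℝ)),
      (∀ᵐ p ∂σ, F p.1 p.2.1 ≤ F p.1 a → p.2.1 ≤ a) →
      (∀ᵐ p ∂σ, G p.1 p.2.2 ≤ G p.1 b → p.2.2 ≤ b) →
      σ (Iic c ×ˢ Iic a ×ˢ Iic b) = σ.map (fun p => (p.1, F p.1 p.2.1, G p.1 p.2.2))
        {q | q.1 ≤ c ∧ q.2.1 ≤ F q.1 a ∧ q.2.2 ≤ G q.1 b} := by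
    intro σ ha hb
    rw [Measure.map_apply hT hS]
    refine measure_congr ?_
    filter_upwards [ha, hb] with p hpa hpb
    refine propext ?_
    change (p.1 ≤ c ∧ p.2.1 ≤ a ∧ p.2.2 ≤ b) ↔
      (p.1 ≤ c ∧ F p.1 p.2.1 ≤ F p.1 a ∧ G p.1 p.2.2 ≤ G p.1 b)
    have := @hFm p.1 p.2.1 a
    have := @hGm p.1 p.2.2 b
    tauto
  exact (aux π (h1 a) (h2 b)).trans (hTeq ▸ (aux π' (h1' a) (h2' b)).symm)

lemma ae_le_of_cdf_kernel_le (μ : Measure ℝ) [IsProbabilityMeasure μ]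
    (κ : Kernel ℝ ℝ) [IsMarkovKernel κ] (hκ : ∀ᵐ z ∂μ, Continuous (cdf (κ z))) (a : ℝ) :
    ∀ᵐ p ∂(μ ⊗ₘ κ), cdf (κ p.1) p.2 ≤ cdf (κ p.1) a → p.2 ≤ a := by
  have hmκ := measurable_cdf_kernel κ
  have hS : MeasurableSet {p : ℝ × ℝ | cdf (κ p.1) p.2 ≤ cdf (κ p.1) a → p.2 ≤ a} := by
    have : {p : ℝ × ℝ | cdf (κ p.1) p.2 ≤ cdf (κ p.1) a → p.2 ≤ a}
        = {p | cdf (κ p.1) p.2 ≤ cdf (κ p.1) a}ᶜ ∪ {p | p.2 ≤ a} := by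
      ext p; simp only [mem_ofPred_eq, mem_union, mem_compl_iff]; tauto
    rw [this]
    exact (measurableSet_le hmκ
      (hmκ.comp (f := fun p : ℝ × ℝ => (p.1, a)) (by fun_prop))).compl.union
      (measurableSet_le measurable_snd measurable_const)
  refine (Measure.ae_compProd_iff hS).mpr ?_
  filter_upwards [hκ] with z hz using ae_le_of_cdf_le (κ z) hz a

lemma eq_compProd_iff (μ : Measure ℝ) [IsProbabilityMeasure μ] (hc : Continuous (cdf μ))
    (κ η : Kernel ℝ ℝ) [IsMarkovKernel κ] [IsMarkovKernel η]
    (hκ : ∀ᵐ z ∂μ, Continuous (cdf (κ z))) (hη : ∀ᵐ z ∂μ, Continuous (cdf (η z)))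
    (π : Measure (ℝ × ℝ × ℝ)) [IsProbabilityMeasure π]
    (hπκ : π.map (fun p => (p.1, p.2.1)) = μ ⊗ₘ κ)
    (hπη : π.map (fun p => (p.1, p.2.2)) = μ ⊗ₘ η) :
    π = μ ⊗ₘ (κ ×ₖ η) ↔
      π.map (fun p => (cdf (κ p.1) p.2.1, cdf (η p.1) p.2.2, cdf μ p.1))
        = (volume.restrict (Icc (0 : ℝ) 1)).prod
          ((volume.restrict (Icc (0 : ℝ) 1)).prod (volume.restrict (Icc (0 : ℝ) 1))) := by
  have hu := map_uniform μ hc κ η hκ hη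
  refine ⟨fun h => h ▸ hu, fun h => ?_⟩
  have e1 : (μ ⊗ₘ (κ ×ₖ η)).map (fun p => (p.1, p.2.1)) = μ ⊗ₘ κ := by
    have := Measure.compProd_map (μ := μ) (κ := κ ×ₖ η) (f := Prod.fst) measurable_fst
    rw [← Kernel.fst_eq, Kernel.fst_prod] at this
    exact this.symm
  have e2 : (μ ⊗ₘ (κ ×ₖ η)).map (fun p => (p.1, p.2.2)) = μ ⊗ₘ η := by
    have := Measure.compProd_map (μ := μ) (κ := κ ×ₖ η) (f := Prod.snd) measurable_snd
    rw [← Kernel.snd_eq, Kernel.snd_prod] at this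
    exact this.symm
  have A : ∀ (σ : Measure (ℝ × ℝ × ℝ)), σ.map (fun p => (p.1, p.2.1)) = μ ⊗ₘ κ →
      ∀ a, ∀ᵐ p ∂σ, cdf (κ p.1) p.2.1 ≤ cdf (κ p.1) a → p.2.1 ≤ a := fun σ hσ a =>
    ae_of_ae_map (f := fun p : ℝ × ℝ × ℝ => (p.1, p.2.1)) (by fun_prop)
      (hσ ▸ ae_le_of_cdf_kernel_le μ κ hκ a)
  have B : ∀ (σ : Measure (ℝ × ℝ × ℝ)), σ.map (fun p => (p.1, p.2.2)) = μ ⊗ₘ η →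
      ∀ a, ∀ᵐ p ∂σ, cdf (η p.1) p.2.2 ≤ cdf (η p.1) a → p.2.2 ≤ a := fun σ hσ a =>
    ae_of_ae_map (f := fun p : ℝ × ℝ × ℝ => (p.1, p.2.2)) (by fun_prop)
      (hσ ▸ ae_le_of_cdf_kernel_le μ η hη a)
  have C : ∀ (σ : Measure (ℝ × ℝ × ℝ)), σ.map (fun p => (p.1, p.2.1)) = μ ⊗ₘ κ →
      ∀ a, ∀ᵐ p ∂σ, cdf μ p.1 ≤ cdf μ a → p.1 ≤ a := fun σ hσ a => by
    have hfst : σ.map Prod.fst = μ := by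
      rw [← Measure.fst_compProd μ κ, ← hσ, Measure.fst,
        Measure.map_map measurable_fst (by fun_prop)]
      rfl
    have h : ∀ᵐ z ∂(σ.map Prod.fst), cdf μ z ≤ cdf μ a → z ≤ a := by
      rw [hfst]; exact ae_le_of_cdf_le μ hc a
    exact ae_of_ae_map (by fun_prop) h
  exact eq_of_map_eq (measurable_cdf_kernel κ) (measurable_cdf_kernel η) hc.measurable
    (fun z => monotone_cdf _) (fun z => monotone_cdf _) (monotone_cdf μ) π _
    (A _ hπκ) (A _ e1) (B _ hπη) (B _ e2) (C _ hπκ) (C _ e1) (h.trans hu.symm)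

/-- The conditional CDF disintegrates `ρ` over its first marginal. -/
lemma eq_compProd_condCDF (ρ : Measure (ℝ × ℝ)) [IsProbabilityMeasure ρ] (κ : Kernel ℝ ℝ)
    [IsMarkovKernel κ] (hκ : ∀ z, κ z = (condCDF ρ z).measure) :
    ρ = ρ.fst ⊗ₘ κ := by
  refine ext_of_generate_finite _ (generateFrom_eq_prod
    MeasurableSpace.generateFrom_measurableSet
    generateFrom_range_Iic_real isCountablySpanning_measurableSet
    isCountablySpanning_range_Iic_real).symm
    (MeasurableSpace.isPiSystem_measurableSet.prod isPiSystem_Iic) ?_ (by simp)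
  rintro _ ⟨s, hs, _, ⟨x, rfl⟩, rfl⟩
  replace hs : MeasurableSet s := hs
  change ρ (s ×ˢ Iic x) = (ρ.fst ⊗ₘ κ) (s ×ˢ Iic x)
  rw [Measure.compProd_apply_prod hs measurableSet_Iic, ← setLIntegral_condCDF ρ x hs]
  simp_rw [hκ, measure_condCDF_Iic]

/-- Almost every fibre of a disintegration of an absolutely continuous law has a continuous CDF. The
finite measure `volume.toFinite`, equivalent to `volume`, serves as the reference measure for the
fibres, since comparing kernels through composition-products requires finite kernels. -/
lemma ae_continuous_cdf (ρ : Measure (ℝ × ℝ)) [IsProbabilityMeasure ρ] (hρ : ρ ≪ volume)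
    (μ : Measure ℝ) [IsProbabilityMeasure μ]
    (κ : Kernel ℝ ℝ) [IsMarkovKernel κ] (h : ρ = μ ⊗ₘ κ) :
    ∀ᵐ z ∂μ, Continuous (cdf (κ z)) := by
  have hv : (volume : Measure (ℝ × ℝ)) ≪
      (volume : Measure ℝ).prod (volume : Measure ℝ).toFinite := by
    rw [Measure.volume_eq_prod]
    exact Measure.AbsolutelyContinuous.rfl.prod (absolutelyContinuous_toFinite _)
  have hac : μ ⊗ₘ κ ≪ (volume : Measure ℝ) ⊗ₘ
      (Kernel.const ℝ (volume : Measure ℝ).toFinite) := by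
    rw [Measure.compProd_const, ← h]
    exact hρ.trans hv
  filter_upwards [hac.kernel_of_compProd] with z hz
  refine continuous_cdf _ fun x => ?_
  refine hz ?_
  exact toFinite_absolutelyContinuous _ (by simp)

/-- Lemma 3.4 (case of a one-dimensional conditioning variable): if `(X, Y, Z)` has a continuous
joint density on `ℝ³`, the CDF of `Z` is continuous, `ρX`, `ρY` are the joint laws of `(Z, X)`
and `(Z, Y)`, and `W = (condCDF ρX Z X, condCDF ρY Z Y, cdf Z)`, then `X` and `Y` are
conditionally independent given (the σ-algebra generated by) `Z` if and only if the law of `W`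
is the uniform distribution on `[0,1]³`. -/
theorem stmt8 {Ω : Type*} [MeasurableSpace Ω] [StandardBorelSpace Ω]
    (P : Measure Ω) [IsProbabilityMeasure P]
    (X Y Z : Ω → ℝ) (hX : Measurable X) (hY : Measurable Y) (hZ : Measurable Z)
    (f : ℝ × ℝ × ℝ → ℝ) (hf_cont : Continuous f)
    (hdens : Measure.map (fun ω => (X ω, Y ω, Z ω)) P
      = volume.withDensity (fun p => ENNReal.ofReal (f p)))
    (hFZ : Continuous (cdf (Measure.map Z P)))
    (ρX ρY : Measure (ℝ × ℝ))
    (hρX : ρX = Measure.map (fun ω => (Z ω, X ω)) P)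
    (hρY : ρY = Measure.map (fun ω => (Z ω, Y ω)) P)
    (W : Ω → ℝ × ℝ × ℝ)
    (hW : W = fun ω =>
      (condCDF ρX (Z ω) (X ω), condCDF ρY (Z ω) (Y ω), cdf (Measure.map Z P) (Z ω))) :
    CondIndepFun (MeasurableSpace.comap Z inferInstance) hZ.comap_le X Y P
      ↔ Measure.map W P
          = (volume.restrict (Icc (0 : ℝ) 1)).prod
              ((volume.restrict (Icc (0 : ℝ) 1)).prod (volume.restrict (Icc (0 : ℝ) 1))) := by
  have pX : IsProbabilityMeasure ρX :=
    hρX ▸ Measure.isProbabilityMeasure_map (hZ.prodMk hX).aemeasurable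
  have pY : IsProbabilityMeasure ρY :=
    hρY ▸ Measure.isProbabilityMeasure_map (hZ.prodMk hY).aemeasurable
  have pZ : IsProbabilityMeasure (P.map Z) := Measure.isProbabilityMeasure_map hZ.aemeasurable
  have pπ : IsProbabilityMeasure (P.map fun ω => (Z ω, X ω, Y ω)) :=
    Measure.isProbabilityMeasure_map (hZ.prodMk (hX.prodMk hY)).aemeasurable
  let κ : Kernel ℝ ℝ := ⟨fun z => (condCDF ρX z).measure, measurable_measure_condCDF ρX⟩
  let η : Kernel ℝ ℝ := ⟨fun z => (condCDF ρY z).measure, measurable_measure_condCDF ρY⟩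
  have mκ : IsMarkovKernel κ := ⟨fun z => instIsProbabilityMeasureCondCDF ρX z⟩
  have mη : IsMarkovKernel η := ⟨fun z => instIsProbabilityMeasureCondCDF ρY z⟩
  have cκ : ∀ z, cdf (κ z) = condCDF ρX z := fun z =>
    cdf_measure_stieltjesFunction _ (tendsto_condCDF_atBot ρX z) (tendsto_condCDF_atTop ρX z)
  have cη : ∀ z, cdf (η z) = condCDF ρY z := fun z =>
    cdf_measure_stieltjesFunction _ (tendsto_condCDF_atBot ρY z) (tendsto_condCDF_atTop ρY z)
  have dX : ρX = P.map Z ⊗ₘ κ := by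
    have h := eq_compProd_condCDF ρX κ fun _ => rfl
    rwa [show ρX.fst = P.map Z by rw [hρX, Measure.fst_map_prodMk hX]] at h
  have dY : ρY = P.map Z ⊗ₘ η := by
    have h := eq_compProd_condCDF ρY η fun _ => rfl
    rwa [show ρY.fst = P.map Z by rw [hρY, Measure.fst_map_prodMk hY]] at h
  have hac : P.map (fun ω => (X ω, Y ω, Z ω)) ≪ volume :=
    hdens ▸ withDensity_absolutelyContinuous _ _
  have q2 : Measure.QuasiMeasurePreserving (Prod.snd : ℝ × ℝ × ℝ → ℝ × ℝ) volume volume :=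
    Measure.quasiMeasurePreserving_snd
  have swp : Measure.QuasiMeasurePreserving (Prod.swap : ℝ × ℝ → ℝ × ℝ) volume volume :=
    (Measure.measurePreserving_swap (μ := volume) (ν := volume)).quasiMeasurePreserving
  have aY : ρY ≪ volume := by
    have := (hac.map (measurable_swap.comp measurable_snd)).trans
      (swp.comp q2).absolutelyContinuous
    rw [Measure.map_map (by fun_prop) (by fun_prop)] at this
    rw [hρY]
    exact this
  have q1 : Measure.QuasiMeasurePreserving (fun p : ℝ × ℝ × ℝ => (p.1, p.2.2))
      volume volume :=
    QuasiMeasurePreserving.prodMap (Measure.QuasiMeasurePreserving.id _)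
      Measure.quasiMeasurePreserving_snd
  have aX : ρX ≪ volume := by
    have := (hac.map (swp.comp q1).measurable).trans
      (swp.comp q1).absolutelyContinuous
    rw [Measure.map_map (swp.comp q1).measurable (by fun_prop)] at this
    rw [hρX]
    exact this
  have kX : condDistrib X Z P =ᵐ[P.map Z] κ :=
    condDistrib_ae_eq_of_measure_eq_compProd Z hX.aemeasurable (hρX ▸ dX)
  have kY : condDistrib Y Z P =ᵐ[P.map Z] η :=
    condDistrib_ae_eq_of_measure_eq_compProd Z hY.aemeasurable (hρY ▸ dY)
  have hprod : (P.map Z) ⊗ₘ (condDistrib X Z P ×ₖ condDistrib Y Z P)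
      = (P.map Z) ⊗ₘ (κ ×ₖ η) := by
    refine Measure.compProd_congr ?_
    filter_upwards [kX, kY] with z h1 h2
    rw [Kernel.prod_apply, Kernel.prod_apply, h1, h2]
  have main := eq_compProd_iff (P.map Z) hFZ κ η (ae_continuous_cdf ρX aX _ κ dX)
    (ae_continuous_cdf ρY aY _ η dY) (P.map fun ω => (Z ω, X ω, Y ω))
    (by rw [← dX, hρX, Measure.map_map (by fun_prop) (by fun_prop)]; rfl)
    (by rw [← dY, hρY, Measure.map_map (by fun_prop) (by fun_prop)]; rfl)
  rw [condIndepFun_iff_map_prod_eq_prod_condDistrib_prod_condDistrib hX hY hZ,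
    ← Measure.compProd_eq_comp_prod, hprod, main]
  have hΦ : Measurable fun p : ℝ × ℝ × ℝ =>
      (cdf (κ p.1) p.2.1, cdf (η p.1) p.2.2, cdf (P.map Z) p.1) :=
    ((measurable_cdf_kernel κ).comp (f := fun p : ℝ × ℝ × ℝ => (p.1, p.2.1))
      (by fun_prop)).prodMk
      (((measurable_cdf_kernel η).comp (f := fun p : ℝ × ℝ × ℝ => (p.1, p.2.2))
        (by fun_prop)).prodMk (hFZ.measurable.comp measurable_fst))
  rw [Measure.map_map hΦ (by fun_prop)]
  have hWeq : W = (fun p : ℝ × ℝ × ℝ =>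
      (cdf (κ p.1) p.2.1, cdf (η p.1) p.2.2, cdf (P.map Z) p.1)) ∘
      fun ω => (Z ω, X ω, Y ω) := by
    rw [hW]
    funext ω
    simp only [Function.comp, cκ, cη]
  rw [hWeq]
end

section
/- Let μ and ν be Borel probability measures on ℝ^k with finite first moments (∫‖x‖ dμ(x) < ∞ and ∫‖x‖ dν(x) < ∞). Then the energy distance 2 ∫∫ ‖s − t‖ dμ(s) dν(t) − ∫∫ ‖s − s′‖ dμ(s) dμ(s′) − ∫∫ ‖t − t′‖ dν(t) dν(t′) is nonnegative, and it equals 0 if and only if μ = ν. -/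
/-!
The Euclidean norm is a mixture of Gaussian kernels: substituting `r ↦ r / ‖x‖` gives
`∫ (1 - exp (-(r ‖x‖)²)) / r² dr = C ‖x‖`, where `C > 0` is the value at `‖x‖ = 1`
(`integral_scaleKernel`, `integral_scaleKernel_one_pos`). By Fubini (`integral_norm_sub_mul`), `C`
times the energy distance is `∫ M r / r² dr`, where
`M r = gaussMean μ μ r + gaussMean ν ν r - 2 * gaussMean μ ν r`.

Since the Gaussian is, up to a constant, its own Fourier transform, `π ^ (k/2) * M r` equals the
integral of `exp (-‖v‖²) ‖φ_μ (2rv) - φ_ν (2rv)‖²` over `v`, with `φ` the characteristic functions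
(`gauss_mmd_eq`). Hence `M r ≥ 0`, and the energy distance is nonnegative. If it vanishes, then
`M r = 0` for some `r ≠ 0`; by continuity the characteristic functions agree everywhere, so `μ = ν`.
-/

open MeasureTheory ProbabilityTheory

/-- The integrand is bounded by `2 / (1 + r²)`; at `r = 0` it takes the value `0` by convention. -/
lemma integrable_scaleKernel_one : Integrable (fun r : ℝ => (1 - Real.exp (-r ^ 2)) / r ^ 2) := by
  refine (integrable_inv_one_add_sq.const_mul 2).mono'
    (Measurable.aestronglyMeasurable (by fun_prop)) (ae_of_all _ fun r => ?_)
  have h1 : Real.exp (-r ^ 2) ≤ 1 := Real.exp_le_one_iff.2 (by nlinarith [sq_nonneg r])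
  have h2 := Real.add_one_le_exp (-r ^ 2)
  have h3 := Real.exp_pos (-r ^ 2)
  rw [Real.norm_of_nonneg (div_nonneg (by linarith) (sq_nonneg r))]
  rcases eq_or_ne r 0 with rfl | hr
  · simp
  have hr2 : 0 < r ^ 2 := by positivity
  rw [← div_eq_mul_inv, div_le_div_iff₀ hr2 (by positivity)]
  nlinarith [mul_pos hr2 h3]

lemma scaleKernel_eq (a r : ℝ) : (1 - Real.exp (-(r * a) ^ 2)) / r ^ 2 =
    a ^ 2 * ((1 - Real.exp (-(a * r) ^ 2)) / (a * r) ^ 2) := by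
  rcases eq_or_ne a 0 with rfl | ha
  · simp
  rcases eq_or_ne r 0 with rfl | hr
  · simp
  rw [mul_comm r a]
  field_simp

lemma integrable_scaleKernel (a : ℝ) :
    Integrable (fun r : ℝ => (1 - Real.exp (-(r * a) ^ 2)) / r ^ 2) := by
  rcases eq_or_ne a 0 with rfl | ha
  · simp
  simp_rw [scaleKernel_eq a]
  exact (integrable_scaleKernel_one.comp_mul_left' ha).const_mul _

/-- A nonnegative `a`, up to the positive factor `∫ (1 - exp (-r²)) / r² dr`, is a mixture of the
functions `1 - exp (-(r a)²)`. -/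
lemma integral_scaleKernel {a : ℝ} (ha : 0 ≤ a) :
    ∫ r : ℝ, (1 - Real.exp (-(r * a) ^ 2)) / r ^ 2 =
      a * ∫ r : ℝ, (1 - Real.exp (-r ^ 2)) / r ^ 2 := by
  rcases ha.eq_or_lt with rfl | ha
  · simp
  simp_rw [scaleKernel_eq a]
  rw [integral_const_mul,
    Measure.integral_comp_mul_left (fun r : ℝ => (1 - Real.exp (-r ^ 2)) / r ^ 2) a,
    abs_of_pos (inv_pos.2 ha), smul_eq_mul]
  field_simp

lemma scaleKernel_nonneg (a r : ℝ) : 0 ≤ (1 - Real.exp (-(r * a) ^ 2)) / r ^ 2 := by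
  have : Real.exp (-(r * a) ^ 2) ≤ 1 := Real.exp_le_one_iff.2 (by nlinarith [sq_nonneg (r * a)])
  exact div_nonneg (by linarith) (sq_nonneg r)

lemma integral_scaleKernel_one_pos : 0 < ∫ r : ℝ, (1 - Real.exp (-r ^ 2)) / r ^ 2 := by
  rw [integral_pos_iff_support_of_nonneg (fun r => by simpa using scaleKernel_nonneg 1 r)
    integrable_scaleKernel_one]
  have : Set.Ioi (0 : ℝ) ⊆ Function.support fun r : ℝ => (1 - Real.exp (-r ^ 2)) / r ^ 2 := by
    intro r hr
    have hr : 0 < r := hr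
    have : Real.exp (-r ^ 2) < 1 := Real.exp_lt_one_iff.2 (by nlinarith [pow_pos hr 2])
    exact (div_pos (by linarith) (pow_pos hr 2)).ne'
  exact lt_of_lt_of_le (by simp) (measure_mono this)

/-- The mean `E exp (-(r ‖S - T‖)²)` of the Gaussian kernel at frequency scale `r`, for independent
`S` with law `α` and `T` with law `β`. -/
noncomputable def gaussMean {k : ℕ} (α β : Measure (EuclideanSpace ℝ (Fin k))) (r : ℝ) : ℝ :=
  ∫ p, Real.exp (-(r * ‖p.1 - p.2‖) ^ 2) ∂(α.prod β)

section
variable {k : ℕ} {α β : Measure (EuclideanSpace ℝ (Fin k))}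
  [IsProbabilityMeasure α] [IsProbabilityMeasure β]

lemma integrable_norm_sub (hα : Integrable (fun x => ‖x‖) α) (hβ : Integrable (fun x => ‖x‖) β) :
    Integrable (fun p : EuclideanSpace ℝ (Fin k) × EuclideanSpace ℝ (Fin k) => ‖p.1 - p.2‖)
      (α.prod β) :=
  ((hα.comp_fst β).add (hβ.comp_snd α)).mono' (by fun_prop)
    (ae_of_all _ fun p => by simpa using norm_sub_le p.1 p.2)

lemma integrable_gauss (r : ℝ) :
    Integrable (fun p : EuclideanSpace ℝ (Fin k) × EuclideanSpace ℝ (Fin k) =>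
      Real.exp (-(r * ‖p.1 - p.2‖) ^ 2)) (α.prod β) := by
  refine (integrable_const (1 : ℝ)).mono' (by fun_prop) (ae_of_all _ fun p => ?_)
  rw [Real.norm_of_nonneg (Real.exp_pos _).le, Real.exp_le_one_iff]
  nlinarith [sq_nonneg (r * ‖p.1 - p.2‖)]

lemma integrable_prod_scaleKernel (hα : Integrable (fun x => ‖x‖) α)
    (hβ : Integrable (fun x => ‖x‖) β) :
    Integrable (Function.uncurry fun
      (p : EuclideanSpace ℝ (Fin k) × EuclideanSpace ℝ (Fin k)) (r : ℝ) =>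
      (1 - Real.exp (-(r * ‖p.1 - p.2‖) ^ 2)) / r ^ 2) ((α.prod β).prod volume) := by
  rw [integrable_prod_iff (by
    refine Measurable.aestronglyMeasurable ?_
    unfold Function.uncurry
    fun_prop)]
  refine ⟨ae_of_all _ fun p => by
    simpa only [Function.uncurry] using integrable_scaleKernel ‖p.1 - p.2‖, ?_⟩
  simp only [Function.uncurry, Real.norm_of_nonneg (scaleKernel_nonneg _ _),
    integral_scaleKernel (norm_nonneg _)]
  exact (integrable_norm_sub hα hβ).mul_const _

lemma integral_kernel_section (r : ℝ) :
    ∫ p, (1 - Real.exp (-(r * ‖p.1 - p.2‖) ^ 2)) / r ^ 2 ∂(α.prod β) =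
      (1 - gaussMean α β r) / r ^ 2 := by
  rw [integral_div, integral_sub (integrable_const _) (integrable_gauss r)]
  simp [gaussMean]

lemma integrable_mixture (hα : Integrable (fun x => ‖x‖) α) (hβ : Integrable (fun x => ‖x‖) β) :
    Integrable fun r : ℝ =>
      (1 - gaussMean α β r) / r ^ 2 := by
  simpa only [Function.uncurry, integral_kernel_section] using
    (integrable_prod_scaleKernel hα hβ).integral_prod_right

/-- The mean distance `E ‖S - T‖` as a mixture of the Gaussian means `1 - gaussMean α β r`. -/
lemma integral_norm_sub_mul (hα : Integrable (fun x => ‖x‖) α)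
    (hβ : Integrable (fun x => ‖x‖) β) :
    (∫ s, ∫ t, ‖s - t‖ ∂β ∂α) * ∫ r : ℝ, (1 - Real.exp (-r ^ 2)) / r ^ 2 =
      ∫ r : ℝ, (1 - gaussMean α β r) / r ^ 2 := by
  rw [integral_integral (integrable_norm_sub hα hβ), ← integral_mul_const]
  simp_rw [← integral_scaleKernel (norm_nonneg _), ← integral_kernel_section]
  exact integral_integral_swap (integrable_prod_scaleKernel hα hβ)

lemma integrable_gaussWeight : Integrable fun v : EuclideanSpace ℝ (Fin k) =>
    Complex.exp (-(‖v‖ : ℂ) ^ 2) := by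
  simpa using GaussianFourier.integrable_cexp_neg_mul_sq_norm_add_of_euclideanSpace
    (b := 1) (by simp) 0 (0 : EuclideanSpace ℝ (Fin k))

lemma norm_gaussWeight (v : EuclideanSpace ℝ (Fin k)) :
    ‖Complex.exp (-(‖v‖ : ℂ) ^ 2)‖ = Real.exp (-‖v‖ ^ 2) := by
  rw [Complex.norm_exp]; norm_cast

/-- Fourier representation of the Gaussian mean: write the Gaussian kernel as the Fourier transform of
`exp (-‖v‖²)` and exchange the integrals. -/
lemma integral_gauss_eq_charFun (r : ℝ) :
    ((Real.pi ^ (k / 2 : ℝ) * gaussMean α β r : ℝ) : ℂ) =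
      ∫ v : EuclideanSpace ℝ (Fin k), Complex.exp (-(‖v‖ : ℂ) ^ 2) *
        (charFun α ((2 * r) • v) * (starRingEnd ℂ) (charFun β ((2 * r) • v))) := by
  have key (x : EuclideanSpace ℝ (Fin k)) :
      ((Real.pi ^ (k / 2 : ℝ) * Real.exp (-(r * ‖x‖) ^ 2) : ℝ) : ℂ) =
        ∫ v : EuclideanSpace ℝ (Fin k), Complex.exp (-(‖v‖ : ℂ) ^ 2) *
          Complex.exp (inner ℝ x ((2 * r) • v) * Complex.I) := by
    have h := GaussianFourier.integral_cexp_neg_mul_sq_norm_add_of_euclideanSpace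
      (b := 1) (by simp) (2 * r * Complex.I) x
    simp_rw [← Complex.exp_add, inner_smul_right]
    convert h.symm using 1
    · rw [Complex.ofReal_mul, Complex.ofReal_cpow Real.pi_pos.le, Complex.ofReal_exp]
      congr 2
      · simp
      · simp
      · push_cast
        ring_nf
        simp
    · congr 1 with v
      push_cast
      ring_nf
  rw [gaussMean, ← integral_const_mul, ← integral_complex_ofReal]
  simp_rw [key]
  have hint : Integrable (Function.uncurry fun
      (p : EuclideanSpace ℝ (Fin k) × EuclideanSpace ℝ (Fin k)) (v : EuclideanSpace ℝ (Fin k)) =>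
      Complex.exp (-(‖v‖ : ℂ) ^ 2) *
        Complex.exp (inner ℝ (p.1 - p.2) ((2 * r) • v) * Complex.I)) ((α.prod β).prod volume) := by
    refine ((integrable_gaussWeight (k := k)).comp_snd (α.prod β)).mono ?_ ?_
    · refine Continuous.aestronglyMeasurable ?_
      unfold Function.uncurry
      fun_prop
    · exact ae_of_all _ fun z => by
        simp only [Function.uncurry, norm_mul, Complex.norm_exp_ofReal_mul_I, mul_one, le_refl]
  rw [integral_integral_swap hint]
  congr 1 with v
  rw [integral_const_mul]
  congr 1
  rw [← charFun_neg, charFun_apply, charFun_apply, ← integral_prod_mul]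
  congr 1 with p
  rw [← Complex.exp_add, inner_sub_left, inner_neg_right]
  push_cast
  ring_nf

lemma integrable_weight_charFun (r : ℝ) :
    Integrable fun v : EuclideanSpace ℝ (Fin k) => Complex.exp (-(‖v‖ : ℂ) ^ 2) *
        (charFun α ((2 * r) • v) * (starRingEnd ℂ) (charFun β ((2 * r) • v))) := by
  refine integrable_gaussWeight.mono ?_ (ae_of_all _ fun v => ?_)
  · have h1 := continuous_charFun (μ := α)
    have h2 := continuous_charFun (μ := β)
    have h3 : Continuous (starRingEnd ℂ) := Complex.continuous_conj
    exact Continuous.aestronglyMeasurable (by fun_prop)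
  · rw [norm_mul, norm_mul, RCLike.norm_conj]
    have h1 := norm_charFun_le_one (μ := α) ((2 * r) • v)
    have h2 := norm_charFun_le_one (μ := β) ((2 * r) • v)
    exact mul_le_of_le_one_right (norm_nonneg _) (mul_le_one₀ h1 (norm_nonneg _) h2)

/-- The squared discrepancy of `α` and `β` for the Gaussian kernel is a weighted `L²` distance of their
characteristic functions. -/
lemma gauss_mmd_eq (r : ℝ) :
    Real.pi ^ (k / 2 : ℝ) * (gaussMean α α r
      + gaussMean β β r
      - 2 * gaussMean α β r) =
    ∫ v : EuclideanSpace ℝ (Fin k), Real.exp (-‖v‖ ^ 2) *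
      ‖charFun α ((2 * r) • v) - charFun β ((2 * r) • v)‖ ^ 2 := by
  have hsymm : gaussMean β α r =
      gaussMean α β r := by
    rw [gaussMean, gaussMean, ← integral_prod_swap]
    simp_rw [Prod.fst_swap, Prod.snd_swap, norm_sub_rev]
  have hsplit : ∀ a b c : ℝ, Real.pi ^ (k / 2 : ℝ) * (a + b - 2 * c) =
      Real.pi ^ (k / 2 : ℝ) * a + Real.pi ^ (k / 2 : ℝ) * b - Real.pi ^ (k / 2 : ℝ) * c
        - Real.pi ^ (k / 2 : ℝ) * c := fun a b c => by ring
  -- The two cross terms are needed in both orders, to be complex conjugates of each other.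
  rw [hsplit]
  nth_rewrite 2 [← hsymm]
  apply Complex.ofReal_injective
  rw [Complex.ofReal_sub, Complex.ofReal_sub, Complex.ofReal_add]
  simp_rw [integral_gauss_eq_charFun]
  have i1 := integrable_weight_charFun (α := α) (β := α) r
  have i2 := integrable_weight_charFun (α := β) (β := β) r
  have i3 := integrable_weight_charFun (α := α) (β := β) r
  have i4 := integrable_weight_charFun (α := β) (β := α) r
  rw [← integral_complex_ofReal, ← integral_add' i1 i2, ← integral_sub' (i1.add i2) i3,
    ← integral_sub' ((i1.add i2).sub i3) i4]
  congr 1 with v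
  simp only [Pi.sub_apply, Pi.add_apply]
  push_cast
  rw [← Complex.mul_conj', map_sub]
  ring

lemma gauss_mmd_nonneg (r : ℝ) :
    0 ≤ gaussMean α α r
      + gaussMean β β r
      - 2 * gaussMean α β r := by
  refine nonneg_of_mul_nonneg_right ?_ (Real.rpow_pos_of_pos Real.pi_pos (k / 2 : ℝ))
  rw [gauss_mmd_eq]
  exact integral_nonneg fun v => by positivity

lemma eq_of_gauss_mmd_eq_zero {r : ℝ} (hr : r ≠ 0)
    (h : gaussMean α α r
      + gaussMean β β r
      - 2 * gaussMean α β r = 0) : α = β := by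
  have h0 := gauss_mmd_eq (α := α) (β := β) r
  rw [h, mul_zero] at h0
  have hc1 := continuous_charFun (μ := α)
  have hc2 := continuous_charFun (μ := β)
  have hcont : Continuous fun v : EuclideanSpace ℝ (Fin k) => Real.exp (-‖v‖ ^ 2) *
      ‖charFun α ((2 * r) • v) - charFun β ((2 * r) • v)‖ ^ 2 := by fun_prop
  have hint : Integrable fun v : EuclideanSpace ℝ (Fin k) => Real.exp (-‖v‖ ^ 2) *
      ‖charFun α ((2 * r) • v) - charFun β ((2 * r) • v)‖ ^ 2 := by
    refine (integrable_gaussWeight.norm.mul_const 4).mono' hcont.aestronglyMeasurable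
      (ae_of_all _ fun v => ?_)
    rw [Real.norm_of_nonneg (by positivity), norm_gaussWeight]
    have h1 := norm_charFun_le_one (μ := α) ((2 * r) • v)
    have h2 := norm_charFun_le_one (μ := β) ((2 * r) • v)
    have h3 := norm_sub_le (charFun α ((2 * r) • v)) (charFun β ((2 * r) • v))
    gcongr
    nlinarith [norm_nonneg (charFun α ((2 * r) • v) - charFun β ((2 * r) • v))]
  have hae := (integral_eq_zero_iff_of_nonneg (fun v => by positivity) hint).1 h0.symm
  have hz := (hcont.ae_eq_iff_eq volume continuous_zero).1 hae
  refine Measure.ext_of_charFun (funext fun t => ?_)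
  have ht := congrFun hz ((2 * r)⁻¹ • t)
  rw [smul_inv_smul₀ (by simpa using hr)] at ht
  simpa [(Real.exp_pos _).ne', sub_eq_zero] using ht

end

/-- Corollary 1 of Székely and Rizzo (2005): for Borel probability measures `μ, ν` on `ℝ^k` with
finite first moments, the energy distance
`2∫∫‖s − t‖ dμ dν − ∫∫‖s − s'‖ dμ dμ − ∫∫‖t − t'‖ dν dν` is nonnegative, and it vanishes if and
only if `μ = ν`. -/
theorem stmt13 (k : ℕ) (μ ν : Measure (EuclideanSpace ℝ (Fin k)))
    [IsProbabilityMeasure μ] [IsProbabilityMeasure ν]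
    (hμ : Integrable (fun x => ‖x‖) μ) (hν : Integrable (fun x => ‖x‖) ν) :
    0 ≤ 2 * (∫ s, ∫ t, ‖s - t‖ ∂ν ∂μ)
        - (∫ s, ∫ t, ‖s - t‖ ∂μ ∂μ) - (∫ t, ∫ t', ‖t - t'‖ ∂ν ∂ν) ∧
      (2 * (∫ s, ∫ t, ‖s - t‖ ∂ν ∂μ)
        - (∫ s, ∫ t, ‖s - t‖ ∂μ ∂μ) - (∫ t, ∫ t', ‖t - t'‖ ∂ν ∂ν) = 0 ↔ μ = ν) := by
  set D := 2 * (∫ s, ∫ t, ‖s - t‖ ∂ν ∂μ)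
        - (∫ s, ∫ t, ‖s - t‖ ∂μ ∂μ) - (∫ t, ∫ t', ‖t - t'‖ ∂ν ∂ν) with hD
  set C := ∫ r : ℝ, (1 - Real.exp (-r ^ 2)) / r ^ 2 with hC
  have hCpos : 0 < C := integral_scaleKernel_one_pos
  set F : ℝ → ℝ := fun r => (gaussMean μ μ r
      + gaussMean ν ν r
      - 2 * gaussMean μ ν r) / r ^ 2 with hF
  have hF0 : 0 ≤ F := fun r => div_nonneg (gauss_mmd_nonneg r) (sq_nonneg r)
  have i1 := (integrable_mixture hμ hν).const_mul 2
  have i2 := integrable_mixture hμ hμ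
  have i3 := integrable_mixture hν hν
  have hFeq : F = fun r : ℝ =>
      2 * ((1 - gaussMean μ ν r) / r ^ 2)
      - (1 - gaussMean μ μ r) / r ^ 2
      - (1 - gaussMean ν ν r) / r ^ 2 := by
    funext r
    rw [hF]
    ring
  have hFint : Integrable F := by
    rw [hFeq]
    exact (i1.sub i2).sub i3
  have hDC : D * C = ∫ r, F r := by
    have e := integral_sub' (i1.sub i2) i3
    rw [integral_sub' i1 i2, integral_const_mul, ← integral_norm_sub_mul hμ hν,
      ← integral_norm_sub_mul hμ hμ, ← integral_norm_sub_mul hν hν] at e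
    rw [hFeq]
    refine Eq.trans ?_ e.symm
    rw [hD]
    ring
  refine ⟨nonneg_of_mul_nonneg_left (hDC ▸ integral_nonneg hF0) hCpos, fun h => ?_, fun h => ?_⟩
  · rw [h, zero_mul] at hDC
    have hae := (integral_eq_zero_iff_of_nonneg hF0 hFint).1 hDC.symm
    obtain ⟨r, hr, hr0⟩ := (hae.and (Measure.ae_ne volume (0 : ℝ))).exists
    refine eq_of_gauss_mmd_eq_zero hr0 ?_
    simpa [hF, hr0] using hr
  · subst h
    rw [hD]
    ring
end
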